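/- arXiv:2510.01422 — 2 statements merged into one kernel-verified Lean document; each statement's English description precedes it below -/
import Mathlib

section
/- Let α ∈ ℤ[θ] with α > 0 and Galois conjugate α'. Then there is no left-finite admissible sequence (b_i)_{i∈ℤ} with infinitely many nonzero entries satisfying Σ_{i∈ℤ} b_i·(−θ⁻¹)^i = α'. (Equivalently: the finite greedy expansion of a positive element of ℤ[θ] is the only positive greedy Laurent series in its Cauchy class.) -/
/-!
Write `φ = θ' = -θ⁻¹`. After multiplying `α` by a power of `θ` the sequence may be taken to start at
index `0`. Put `S_n = Σ_{i<n} b_i θ^i` and `β_n = (α - S_n)/θ^n ∈ ℤ[θ]`; the conjugate of `β_n` is the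
shifted series `Σ_{i≥0} b_{n+i} φ^i`, which lies in `[-1, θ]` because the digits lie in `[0, a]` and
`a Σ θ^{-2i} = θ` (`conj_tail_bounds`).

Admissibility gives `S_n < θ^n` (`partial_lt`), so `β_n > -1` since `α > 0`; as infinitely many
digits are nonzero, `S_n → ∞`, so `β_n < 0` for all large `n`. The only element of `ℤ[θ]` in `(-1, 0)`
with conjugate in `[-1, θ]` is `a - θ = -θ⁻¹` (`window_unique`). Hence `β_n = β_{n+1} = a - θ` for
large `n`, and `β_n = b_n + θ β_{n+1}` forces `θ = a + 1 - b_n` to be an integer, which is absurd.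
-/

noncomputable section

/-- The real quadratic unit `θ = (a + √(a²+4))/2`, the positive root of `θ² = aθ + 1`
(the norm `N(θ) = −1` case). -/
def theta (a : ℕ) : ℝ := ((a : ℝ) + Real.sqrt ((a : ℝ) ^ 2 + 4)) / 2

/-- The Galois conjugate `θ' = −θ⁻¹`. -/
def thetaConj (a : ℕ) : ℝ := -(theta a)⁻¹

/-- Membership in the ring `ℤ[θ]`. -/
def inOK (a : ℕ) (x : ℝ) : Prop := ∃ p q : ℤ, x = (p : ℝ) + (q : ℝ) * theta a

/-- A finite integer sequence, supported in `[m, M]`, is admissible (norm `−1` case) if all its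
entries lie in `{0, …, a}` and an entry equal to `a` is always followed (below) by a `0`. -/
def AdmissibleOn (a : ℕ) (m M : ℤ) (b : ℤ → ℤ) : Prop :=
  (∀ i, b i ≠ 0 → m ≤ i ∧ i ≤ M) ∧
  (∀ i, 0 ≤ b i ∧ b i ≤ (a : ℤ)) ∧
  (∀ i, b i = (a : ℤ) → b (i - 1) = 0)

/-- The set `ℤ_θ` of θ-integers: signed sums `± Σ_{i=0}^{M} b_i θ^i` with `(b_i)` admissible. -/
def Ztheta (a : ℕ) : Set ℝ :=
  { x | ∃ (ε : ℤ) (M : ℤ) (b : ℤ → ℤ), (ε = 1 ∨ ε = -1) ∧ 0 ≤ M ∧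
      AdmissibleOn a 0 M b ∧
      x = (ε : ℝ) * ∑ i ∈ Finset.Icc (0 : ℤ) M, (b i : ℝ) * theta a ^ i }

/-- `v(x) = max { k : ℤ | x / θ^k ∈ ℤ_θ }` (as a supremum in `ℤ`). -/
def vval (a : ℕ) (x : ℝ) : ℤ := sSup { k : ℤ | x / theta a ^ k ∈ Ztheta a }

/-- The θ-adic infranorm `|x|_θ = θ^{−v(x)}`, with `|0|_θ = 0`. -/
def thNorm (a : ℕ) (x : ℝ) : ℝ := if x = 0 then 0 else theta a ^ (-vval a x)

/-- A sequence in `ℝ` is `|·|_θ`-Cauchy. -/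
def IsThCauchy (a : ℕ) (x : ℕ → ℝ) : Prop :=
  ∀ ε : ℝ, 0 < ε → ∃ N : ℕ, ∀ i j : ℕ, N ≤ i → N ≤ j → thNorm a (x i - x j) < ε

/-- A left-finite admissible integer sequence `(b_i)_{i ∈ ℤ}` with infinitely many nonzero
entries whose series of conjugates `Σ_{i∈ℤ} b_i (−θ⁻¹)^i` sums to the real number `c`. -/
def ConjSeries (a : ℕ) (b : ℤ → ℤ) (c : ℝ) : Prop :=
  (∃ m : ℤ, ∀ i : ℤ, i < m → b i = 0) ∧
  (∀ i : ℤ, 0 ≤ b i ∧ b i ≤ (a : ℤ)) ∧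
  (∀ i : ℤ, b i = (a : ℤ) → b (i - 1) = 0) ∧
  (∀ N : ℤ, ∃ i : ℤ, N ≤ i ∧ b i ≠ 0) ∧
  (∑' i : ℤ, (b i : ℝ) * thetaConj a ^ i) = c

lemma theta_sq (a : ℕ) : theta a ^ 2 = a * theta a + 1 := by
  have h : Real.sqrt ((a : ℝ) ^ 2 + 4) ^ 2 = (a : ℝ) ^ 2 + 4 := Real.sq_sqrt (by positivity)
  unfold theta
  nlinarith

lemma theta_pos (a : ℕ) : 0 < theta a := by
  have h : 0 < Real.sqrt ((a : ℝ) ^ 2 + 4) := Real.sqrt_pos.mpr (by positivity)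
  unfold theta
  positivity

lemma lt_theta (a : ℕ) : (a : ℝ) < theta a := by
  have h := theta_sq a
  have h0 := theta_pos a
  by_contra hc
  nlinarith

lemma theta_lt (a : ℕ) (ha : 1 ≤ a) : theta a < a + 1 := by
  have h := theta_sq a
  have h1 := lt_theta a
  have ha' : (1 : ℝ) ≤ a := by exact_mod_cast ha
  by_contra hc
  nlinarith

lemma inv_theta (a : ℕ) : (theta a)⁻¹ = theta a - a := by
  have h := theta_sq a
  have h0 := theta_pos a
  exact inv_eq_of_mul_eq_one_right (by nlinarith)

lemma thetaConj_eq (a : ℕ) : thetaConj a = a - theta a := by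
  rw [thetaConj, inv_theta]; ring

lemma thetaConj_sq (a : ℕ) : thetaConj a ^ 2 = a * thetaConj a + 1 := by
  have h := theta_sq a
  rw [thetaConj_eq]
  nlinarith

lemma thetaConj_neg (a : ℕ) : thetaConj a < 0 := by
  have := lt_theta a
  rw [thetaConj_eq]; linarith

lemma neg_one_lt_thetaConj (a : ℕ) (ha : 1 ≤ a) : -1 < thetaConj a := by
  have := theta_lt a ha
  rw [thetaConj_eq]; linarith

lemma digits_summable (a : ℕ) (ha : 1 ≤ a) (c : ℕ → ℤ)
    (hc : ∀ i, 0 ≤ c i ∧ c i ≤ (a : ℤ)) :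
    Summable fun i : ℕ => (c i : ℝ) * thetaConj a ^ i := by
  have hn := thetaConj_neg a
  have hg : Summable fun i : ℕ => (a : ℝ) * |thetaConj a| ^ i :=
    (summable_geometric_of_lt_one (abs_nonneg _)
      (abs_lt.mpr ⟨neg_one_lt_thetaConj a ha, by linarith⟩)).mul_left _
  refine Summable.of_norm_bounded hg fun i => ?_
  have h0 : (0 : ℝ) ≤ c i := by exact_mod_cast (hc i).1
  have h1 : (c i : ℝ) ≤ a := by exact_mod_cast (hc i).2
  rw [norm_mul, norm_pow, Real.norm_eq_abs, Real.norm_eq_abs, abs_of_nonneg h0]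
  gcongr

/-- A series in `φ² = θ⁻²` with digits in `[0, a]` lies in `[0, θ]`, as `a / (1 - θ⁻²) = θ`. -/
lemma sq_series_bounds (a : ℕ) (ha : 1 ≤ a) (c : ℕ → ℤ)
    (hc : ∀ i, 0 ≤ c i ∧ c i ≤ (a : ℤ)) :
    (Summable fun i : ℕ => (c i : ℝ) * (thetaConj a ^ 2) ^ i) ∧
    0 ≤ ∑' i : ℕ, (c i : ℝ) * (thetaConj a ^ 2) ^ i ∧
    ∑' i : ℕ, (c i : ℝ) * (thetaConj a ^ 2) ^ i ≤ theta a := by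
  have hn := thetaConj_neg a
  have hn1 := neg_one_lt_thetaConj a ha
  have hr0 : 0 ≤ thetaConj a ^ 2 := sq_nonneg _
  have hr1 : thetaConj a ^ 2 < 1 := by nlinarith
  have hc0 (i : ℕ) : (0 : ℝ) ≤ c i := by exact_mod_cast (hc i).1
  have hc1 (i : ℕ) : (c i : ℝ) ≤ a := by exact_mod_cast (hc i).2
  have hg : HasSum (fun i : ℕ => (a : ℝ) * (thetaConj a ^ 2) ^ i) (theta a) := by
    have h := (hasSum_geometric_of_lt_one hr0 hr1).mul_left (a : ℝ)
    have e : (a : ℝ) * (1 - thetaConj a ^ 2)⁻¹ = theta a := by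
      rw [mul_inv_eq_iff_eq_mul₀ (by linarith), thetaConj_sq, thetaConj_eq]
      linear_combination (-(a : ℝ)) * theta_sq a
    rwa [e] at h
  have hle (i : ℕ) : (c i : ℝ) * (thetaConj a ^ 2) ^ i ≤ a * (thetaConj a ^ 2) ^ i :=
    mul_le_mul_of_nonneg_right (hc1 i) (by positivity)
  have hnn (i : ℕ) : 0 ≤ (c i : ℝ) * (thetaConj a ^ 2) ^ i :=
    mul_nonneg (hc0 i) (by positivity)
  have hs := Summable.of_nonneg_of_le hnn hle hg.summable
  exact ⟨hs, tsum_nonneg hnn, hg.tsum_eq ▸ hs.tsum_le_tsum hle hg.summable⟩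

/-- Even-index terms contribute an amount in `[0, θ]`, odd-index terms one in `[-1, 0]`. -/
lemma conj_tail_bounds (a : ℕ) (ha : 1 ≤ a) (c : ℕ → ℤ)
    (hc : ∀ i, 0 ≤ c i ∧ c i ≤ (a : ℤ)) :
    -1 ≤ ∑' i : ℕ, (c i : ℝ) * thetaConj a ^ i ∧
    ∑' i : ℕ, (c i : ℝ) * thetaConj a ^ i ≤ theta a := by
  obtain ⟨hs0, h00, h01⟩ := sq_series_bounds a ha (fun i => c (2 * i)) fun i => hc _
  obtain ⟨hs1, h10, h11⟩ := sq_series_bounds a ha (fun i => c (2 * i + 1)) fun i => hc _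
  have ee (i : ℕ) : (c (2 * i) : ℝ) * thetaConj a ^ (2 * i)
      = (c (2 * i) : ℝ) * (thetaConj a ^ 2) ^ i := by rw [pow_mul]
  have eo (i : ℕ) : (c (2 * i + 1) : ℝ) * thetaConj a ^ (2 * i + 1)
      = thetaConj a * ((c (2 * i + 1) : ℝ) * (thetaConj a ^ 2) ^ i) := by
    rw [pow_succ, pow_mul]; ring
  have key := tsum_even_add_odd (f := fun i : ℕ => (c i : ℝ) * thetaConj a ^ i)
    (by simpa only [ee] using hs0) (by simpa only [eo] using hs1.mul_left (thetaConj a))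
  simp only [ee, eo, tsum_mul_left] at key
  rw [← key]
  have hn := thetaConj_neg a
  have hprod : thetaConj a * theta a = -1 := by
    rw [thetaConj_eq]; linear_combination -theta_sq a
  constructor <;> nlinarith

/-- The admissibility condition makes partial sums behave like greedy expansions. -/
lemma partial_lt (a : ℕ) (c : ℕ → ℤ)
    (hc : ∀ i, 0 ≤ c i ∧ c i ≤ (a : ℤ)) (hadm : ∀ i, c (i + 1) = (a : ℤ) → c i = 0) :
    ∀ n : ℕ, ∑ i ∈ Finset.range n, (c i : ℝ) * theta a ^ i < theta a ^ n := by
  have hp := theta_pos a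
  have hl := lt_theta a
  intro n
  induction n using Nat.strong_induction_on with
  | _ n ih =>
    rcases n with _ | n
    · simp
    rw [Finset.sum_range_succ, pow_succ]
    have hpn : 0 < theta a ^ n := by positivity
    rcases (hc n).2.lt_or_eq with h | h
    · have h1 : (c n : ℝ) + 1 ≤ a := by exact_mod_cast h
      have := ih n (by omega)
      nlinarith
    · rcases n with _ | n
      · have h1 : (c 0 : ℝ) = a := by exact_mod_cast h
        simpa [h1] using hl
      · have h0 := hadm n h
        have h1 : (c (n + 1) : ℝ) = a := by exact_mod_cast h
        have := ih n (by omega)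
        rw [Finset.sum_range_succ, h0, h1]
        have e : theta a ^ (n + 1) * theta a = a * theta a ^ (n + 1) + theta a ^ n := by
          linear_combination theta a ^ n * theta_sq a
        rw [e]
        push_cast
        linarith

lemma partial_unbounded (a : ℕ) (ha : 1 ≤ a) (c : ℕ → ℤ) (hc : ∀ i, 0 ≤ c i)
    (hinf : ∀ N : ℕ, ∃ i, N ≤ i ∧ c i ≠ 0) (K : ℕ) :
    ∃ N : ℕ, ∀ n, N ≤ n → (K : ℝ) ≤ ∑ i ∈ Finset.range n, (c i : ℝ) * theta a ^ i := by
  have h1 : 1 ≤ theta a := by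
    have ha' : (1 : ℝ) ≤ a := by exact_mod_cast ha
    linarith [lt_theta a]
  have hnn (i : ℕ) : 0 ≤ (c i : ℝ) * theta a ^ i :=
    mul_nonneg (by exact_mod_cast hc i) (by positivity)
  have hmono {m n : ℕ} (h : m ≤ n) : ∑ i ∈ Finset.range m, (c i : ℝ) * theta a ^ i
      ≤ ∑ i ∈ Finset.range n, (c i : ℝ) * theta a ^ i :=
    Finset.sum_le_sum_of_subset_of_nonneg (Finset.range_mono h) fun i _ _ => hnn i
  induction K with
  | zero => exact ⟨0, fun n _ => by simpa using Finset.sum_nonneg fun i _ => hnn i⟩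
  | succ K ih =>
    obtain ⟨N, hN⟩ := ih
    obtain ⟨i, hi, hne⟩ := hinf N
    refine ⟨i + 1, fun n hn => le_trans ?_ (hmono hn)⟩
    rw [Finset.sum_range_succ]
    have hci : (1 : ℝ) ≤ c i := by
      have : 1 ≤ c i := by have := hc i; omega
      exact_mod_cast this
    have hpi : 1 ≤ theta a ^ i := one_le_pow₀ h1
    have := hN i hi
    push_cast
    nlinarith

/-- The only element of `ℤ[θ]` in `(-1, 0)` with conjugate in `[-1, θ]` is `a - θ`. -/
lemma window_unique (a : ℕ) (ha : 1 ≤ a) (P Q : ℤ)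
    (h1 : -1 < (P : ℝ) + Q * theta a) (h2 : (P : ℝ) + Q * theta a < 0)
    (h3 : -1 ≤ (P : ℝ) + Q * thetaConj a) (h4 : (P : ℝ) + Q * thetaConj a ≤ theta a) :
    P = a ∧ Q = -1 := by
  have ha' : (1 : ℝ) ≤ a := by exact_mod_cast ha
  have hl := lt_theta a
  have hu := theta_lt a ha
  have hsq := theta_sq a
  rw [thetaConj_eq] at h3 h4
  -- The difference of an element and its conjugate is `Q (2θ - a) = Q (θ + θ⁻¹)`.
  have hd1 : (Q : ℝ) * (2 * theta a - a) < 1 := by linarith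
  have hd2 : -1 - theta a < (Q : ℝ) * (2 * theta a - a) := by linarith
  have hQ1 : Q < 1 := by
    by_contra hc
    have : (1 : ℝ) ≤ Q := by exact_mod_cast not_lt.mp hc
    nlinarith
  have hQ2 : -2 < Q := by
    by_contra hc
    have : (Q : ℝ) ≤ -2 := by exact_mod_cast not_lt.mp hc
    nlinarith [sq_nonneg (theta a - a - 1)]
  have hQ : Q = 0 ∨ Q = -1 := by omega
  rcases hQ with rfl | rfl
  · exfalso
    have i1 : (-1 : ℤ) < P := by exact_mod_cast (by simpa using h1 : (-1 : ℝ) < P)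
    have i2 : P < 0 := by exact_mod_cast (by simpa using h2 : (P : ℝ) < 0)
    omega
  · refine ⟨?_, rfl⟩
    push_cast at h1 h2
    have i1 : (a : ℤ) - 1 < P := by
      have : ((a : ℝ) - 1) < P := by linarith
      exact_mod_cast this
    have i2 : P < (a : ℤ) + 1 := by
      have : (P : ℝ) < a + 1 := by linarith
      exact_mod_cast this
    omega

/-- The remainders `β_n = P_n + Q_n θ`: with `S_n` the `n`-th partial sum, `α = S_n + θ^n β_n`, and
the conjugate of `β_n` is the `n`-th shifted series. -/
lemma remainder (a : ℕ) (ha : 1 ≤ a) (c : ℕ → ℤ) (hc : ∀ i, 0 ≤ c i ∧ c i ≤ (a : ℤ)) (p q : ℤ)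
    (hsum : ∑' i : ℕ, (c i : ℝ) * thetaConj a ^ i = p + q * thetaConj a) (n : ℕ) :
    ∃ P Q : ℤ, (p : ℝ) + q * theta a =
        ∑ i ∈ Finset.range n, (c i : ℝ) * theta a ^ i + theta a ^ n * (P + Q * theta a) ∧
      ∑' i : ℕ, (c (n + i) : ℝ) * thetaConj a ^ i = P + Q * thetaConj a := by
  induction n with
  | zero => exact ⟨p, q, by simp, by simpa using hsum⟩
  | succ n ih =>
    obtain ⟨P, Q, h1, h2⟩ := ih
    -- Division of `P - c_n + Q θ` by `θ`, using `θ⁻¹ = θ - a` and likewise for the conjugate.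
    refine ⟨Q - a * (P - c n), P - c n, ?_, ?_⟩
    · rw [h1, Finset.sum_range_succ]
      push_cast
      linear_combination (-((P : ℝ) - c n) * theta a ^ n) * theta_sq a
    · have hs := digits_summable a ha (fun i => c (n + i)) fun i => hc _
      have h3 := hs.tsum_eq_zero_add
      have e (i : ℕ) : (c (n + (i + 1)) : ℝ) * thetaConj a ^ (i + 1)
          = thetaConj a * ((c (n + 1 + i) : ℝ) * thetaConj a ^ i) := by
        rw [show n + (i + 1) = n + 1 + i by ring]; ring
      simp only [e, tsum_mul_left, h2, add_zero, pow_zero, mul_one] at h3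
      refine mul_left_cancel₀ (thetaConj_neg a).ne ?_
      push_cast
      linear_combination -h3 - ((P : ℝ) - c n) * thetaConj_sq a

/-- The theorem for sequences supported on the nonnegative indices. -/
lemma no_series_nat (a : ℕ) (ha : 1 ≤ a) (c : ℕ → ℤ) (hc : ∀ i, 0 ≤ c i ∧ c i ≤ (a : ℤ))
    (hadm : ∀ i, c (i + 1) = (a : ℤ) → c i = 0) (hinf : ∀ N : ℕ, ∃ i, N ≤ i ∧ c i ≠ 0)
    (p q : ℤ) (hpos : 0 < (p : ℝ) + q * theta a)
    (hsum : ∑' i : ℕ, (c i : ℝ) * thetaConj a ^ i = p + q * thetaConj a) : False := by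
  obtain ⟨K, hK⟩ := exists_nat_gt ((p : ℝ) + q * theta a)
  obtain ⟨N, hN⟩ := partial_unbounded a ha c (fun i => (hc i).1) hinf K
  have main (n : ℕ) (hn : N ≤ n) : (p : ℝ) + q * theta a =
      ∑ i ∈ Finset.range n, (c i : ℝ) * theta a ^ i + theta a ^ n * (a - theta a) := by
    obtain ⟨P, Q, h1, h2⟩ := remainder a ha c hc p q hsum n
    obtain ⟨b1, b2⟩ := conj_tail_bounds a ha (fun i => c (n + i)) fun i => hc _
    rw [h2] at b1 b2
    have hlt := partial_lt a c hc hadm n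
    have hge := hN n hn
    have hpn : 0 < theta a ^ n := pow_pos (theta_pos a) n
    obtain ⟨rfl, rfl⟩ := window_unique a ha P Q (by by_contra hh; nlinarith)
      (by by_contra hh; nlinarith) b1 b2
    rw [h1]; push_cast; ring
  have m1 := main N le_rfl
  have m2 := main (N + 1) (by omega)
  rw [Finset.sum_range_succ] at m2
  have hpn : 0 < theta a ^ N := pow_pos (theta_pos a) N
  have h : theta a = a + 1 - c N := by
    refine mul_left_cancel₀ hpn.ne' ?_
    linear_combination m1 - m2 + theta a ^ N * theta_sq a
  have hl := lt_theta a
  have hu := theta_lt a ha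
  have i1 : (c N : ℝ) < 1 := by linarith
  have i2 : (0 : ℝ) < c N := by linarith
  have i1' : c N < 1 := by exact_mod_cast i1
  have i2' : 0 < c N := by exact_mod_cast i2
  omega

lemma mul_theta_pow (a : ℕ) (p q : ℤ) (k : ℕ) : ∃ P Q : ℤ,
    (P : ℝ) + Q * theta a = theta a ^ k * (p + q * theta a) ∧
    (P : ℝ) + Q * thetaConj a = thetaConj a ^ k * (p + q * thetaConj a) := by
  induction k with
  | zero => exact ⟨p, q, by simp, by simp⟩
  | succ k ih =>
    obtain ⟨P, Q, h1, h2⟩ := ih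
    refine ⟨Q, P + a * Q, ?_, ?_⟩
    · push_cast
      linear_combination theta a * h1 - (Q : ℝ) * theta_sq a
    · push_cast
      linear_combination thetaConj a * h2 - (Q : ℝ) * thetaConj_sq a

/-- Let `α = p + qθ ∈ ℤ[θ]` with `α > 0`. Then there is no left-finite
admissible sequence `(b_i)` with infinitely many nonzero entries satisfying
`Σ_{i∈ℤ} b_i (−θ⁻¹)^i = α'`; i.e. the finite greedy expansion of a positive element of `ℤ[θ]`
is the only positive greedy Laurent series in its Cauchy class. -/
theorem positive_unique_laurent (a : ℕ) (ha : 1 ≤ a) (p q : ℤ)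
    (hpos : 0 < (p : ℝ) + (q : ℝ) * theta a) :
    ¬ ∃ b : ℤ → ℤ, ConjSeries a b ((p : ℝ) + (q : ℝ) * thetaConj a) := by
  rintro ⟨b, ⟨m, hm⟩, hb, hadm, hinf, hsum⟩
  -- A nonpositive starting index `-k` means that only multiplication by `θ^k`, `k ∈ ℕ`, is needed.
  obtain ⟨k, hk⟩ : ∃ k : ℕ, ∀ i : ℤ, i < -k → b i = 0 :=
    ⟨m.natAbs, fun i hi => hm i (by omega)⟩
  obtain ⟨P, Q, h1, h2⟩ := mul_theta_pow a p q k
  refine no_series_nat a ha (fun i => b (i - k)) (fun i => hb _) (fun i hi => ?_) (fun N => ?_) P Q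
    (h1 ▸ mul_pos (pow_pos (theta_pos a) k) hpos) ?_
  · have := hadm _ hi
    rwa [show ((i + 1 : ℕ) : ℤ) - k - 1 = i - k by push_cast; ring] at this
  · obtain ⟨i, hi, hne⟩ := hinf N
    refine ⟨(i + k).toNat, by omega, ?_⟩
    rwa [show (((i + k).toNat : ℕ) : ℤ) - k = i by omega]
  · rw [h2, ← hsum, ← tsum_mul_left]
    have hinj : Function.Injective fun i : ℕ => (i : ℤ) - k := fun i j h => by
      simp only at h; omega
    have hsupp : Function.support
        (fun i : ℤ => thetaConj a ^ k * ((b i : ℝ) * thetaConj a ^ i)) ⊆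
        Set.range fun i : ℕ => (i : ℤ) - k := by
      intro i hi
      have hik : ¬ i < -k := fun h => hi (by simp [hk i h])
      exact ⟨(i + k).toNat, by simp only; omega⟩
    rw [← hinj.tsum_eq hsupp]
    refine tsum_congr fun i => ?_
    have hne := (thetaConj_neg a).ne
    rw [zpow_sub₀ hne, zpow_natCast, zpow_natCast]
    field_simp
end
end

section
/- Norm–conjugate comparison (norm 1 case): for every f ∈ O_K⁰ with f > 0, one has |f|_θ ≤ f' ≤ θ·|f|_θ, where f' denotes the Galois conjugate of f. -/
/-!
Write `t = θ⁻¹` for the conjugate of `θ`. If `f / θ^k = ∑ bᵢ θ^i` with `b` admissible, then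
conjugation gives `f' = θ^{-k} ∑ bᵢ t^i`. The forbidden-block condition is symmetric under reversal,
so Parry's estimate applies to this sum and yields `f' ≤ θ · θ^{-k}` (`admissible_sum_le`). In
particular the set of such `k` is bounded above, and at its maximum `v` the digit `b₀` is nonzero
(otherwise one could shift once more), so `f' ≥ θ^{-v}`.

What remains is that the set of such `k` is nonempty, i.e. that a totally positive `f` has a finite
admissible expansion. The cones spanned by `θ^k` and `θ^{k+1}` tile the totally positive quadrant,
and each pair is a `ℤ`-basis of `ℤ[θ]`, so `f = p θ^k + q θ^{k+1}` with `p, q ≥ 0`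
(`exists_nonneg_rep`). Among all representations with nonnegative digits take one with the smallest
digit sum. The relation `a θ^k = θ^{k-1} + θ^{k+1}`, summed over `i ≤ k ≤ j`, rewrites a digit `≥ a`
(when `i = j`) or a forbidden block (when `i < j`) as `θ^{i-1} + θ^{j+1}` and lowers the digit sum,
so the minimal representation is admissible (`exists_admissible_rep`).
-/

noncomputable section

/-- The real quadratic unit `θ = (a + √(a²−4))/2`, the larger root of `θ² = aθ − 1`
(the norm `N(θ) = 1` case, `a ≥ 3`). -/
def theta1 (a : ℕ) : ℝ := ((a : ℝ) + Real.sqrt ((a : ℝ) ^ 2 - 4)) / 2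

/-- Membership in the ring `ℤ[θ]`. -/
def inR1 (a : ℕ) (x : ℝ) : Prop := ∃ p q : ℤ, x = (p : ℝ) + (q : ℝ) * theta1 a

/-- A finite integer sequence, supported in `[m, M]`, is admissible (norm `1` case) if all its
entries lie in `{0, …, a−1}` and it contains no forbidden block: no indices `i < j` with
`b_i = b_j = a−1` and `b_k = a−2` for all `i < k < j`. -/
def AdmissibleOn1 (a : ℕ) (m M : ℤ) (b : ℤ → ℤ) : Prop :=
  (∀ i, b i ≠ 0 → m ≤ i ∧ i ≤ M) ∧
  (∀ i, 0 ≤ b i ∧ b i ≤ (a : ℤ) - 1) ∧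
  ¬ ∃ i j : ℤ, i < j ∧ b i = (a : ℤ) - 1 ∧ b j = (a : ℤ) - 1 ∧
      ∀ k, i < k → k < j → b k = (a : ℤ) - 2

/-- The set `ℤ_θ` of θ-integers: signed sums `± Σ_{i=0}^{M} b_i θ^i` with `(b_i)` admissible. -/
def Ztheta1 (a : ℕ) : Set ℝ :=
  { x | ∃ (ε : ℤ) (M : ℤ) (b : ℤ → ℤ), (ε = 1 ∨ ε = -1) ∧ 0 ≤ M ∧
      AdmissibleOn1 a 0 M b ∧
      x = (ε : ℝ) * ∑ i ∈ Finset.Icc (0 : ℤ) M, (b i : ℝ) * theta1 a ^ i }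

/-- `x ∈ O_K⁰`: `x ∈ ℤ[θ]` and `x` has the same sign as its Galois conjugate `x'`. -/
def inOK0 (a : ℕ) (x : ℝ) : Prop :=
  ∃ p q : ℤ, x = (p : ℝ) + (q : ℝ) * theta1 a ∧
    0 ≤ x * ((p : ℝ) + (q : ℝ) * (theta1 a)⁻¹)

/-- `x ∈ O_K¹`: `x ∈ ℤ[θ]` and `x` has sign opposite to its Galois conjugate `x'`. -/
def inOK1 (a : ℕ) (x : ℝ) : Prop :=
  ∃ p q : ℤ, x = (p : ℝ) + (q : ℝ) * theta1 a ∧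
    x * ((p : ℝ) + (q : ℝ) * (theta1 a)⁻¹) ≤ 0

/-- `v(x) = max { k : ℤ | x / θ^k ∈ ℤ_θ }` (as a supremum in `ℤ`). -/
def vval1 (a : ℕ) (x : ℝ) : ℤ := sSup { k : ℤ | x / theta1 a ^ k ∈ Ztheta1 a }

open Classical in
/-- The θ-adic infranorm (norm `1` case): for nonzero `x ∈ O_K⁰` it is `θ^{−v(x)}`, and for
nonzero `x ∈ O_K¹` it is `|T·x|_θ` where `T = θ − 1`; `|0|_θ = 0`. -/
def thNorm1 (a : ℕ) (x : ℝ) : ℝ :=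
  if x = 0 then 0
  else if inOK0 a x then theta1 a ^ (-vval1 a x)
  else theta1 a ^ (-vval1 a ((theta1 a - 1) * x))

/-- A sequence in `ℝ` is `|·|_θ`-Cauchy. -/
def IsThCauchy1 (a : ℕ) (x : ℕ → ℝ) : Prop :=
  ∀ ε : ℝ, 0 < ε → ∃ N : ℕ, ∀ i j : ℕ, N ≤ i → N ≤ j → thNorm1 a (x i - x j) < ε

/-! ### The unit `θ` -/

lemma theta1_sq {a : ℕ} (ha : 3 ≤ a) : theta1 a ^ 2 = a * theta1 a - 1 := by
  have h : (3 : ℝ) ≤ a := by exact_mod_cast ha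
  have hs : Real.sqrt ((a : ℝ) ^ 2 - 4) ^ 2 = (a : ℝ) ^ 2 - 4 := Real.sq_sqrt (by nlinarith)
  unfold theta1
  linear_combination hs / 4

lemma one_lt_theta1 {a : ℕ} (ha : 3 ≤ a) : 1 < theta1 a := by
  have h : (3 : ℝ) ≤ a := by exact_mod_cast ha
  have := Real.sqrt_nonneg ((a : ℝ) ^ 2 - 4)
  unfold theta1
  linarith

lemma theta1_inv {a : ℕ} (ha : 3 ≤ a) : (theta1 a)⁻¹ = a - theta1 a := by
  have h := one_lt_theta1 ha
  have h2 := theta1_sq ha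
  symm
  apply eq_inv_of_mul_eq_one_left
  linear_combination -h2

lemma irrational_theta1 {a : ℕ} (ha : 3 ≤ a) : Irrational (theta1 a) := by
  obtain ⟨b, rfl⟩ := Nat.exists_eq_add_of_le ha
  have h1 : (((3 + b : ℕ) : ℝ)) ^ 2 - 4 = ((b ^ 2 + 6 * b + 5 : ℕ) : ℝ) := by
    push_cast; ring
  -- `(a - 1)² < a² - 4 < a²`, so the discriminant is not a square.
  have h2 : Irrational (Real.sqrt ((b ^ 2 + 6 * b + 5 : ℕ) : ℝ)) := by
    rw [irrational_sqrt_natCast_iff]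
    rintro ⟨r, hr⟩
    have : b + 2 < r := by nlinarith
    have : r < b + 3 := by nlinarith
    omega
  unfold theta1
  rw [h1]
  exact_mod_cast (h2.natCast_add (3 + b)).div_natCast (m := 2) (by norm_num)

lemma coeffs_eq_zero {a : ℕ} (ha : 3 ≤ a) {p q : ℤ} (h : (p : ℝ) + q * theta1 a = 0) :
    p = 0 ∧ q = 0 := by
  have hq : q = 0 := by
    by_contra hq
    have := ((irrational_theta1 ha).intCast_mul hq).intCast_add p
    rw [h] at this
    exact this ⟨0, by simp⟩
  subst hq
  simpa using h

/-! ### Galois conjugation -/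

/-- `y` is the Galois conjugate of `x ∈ ℤ[θ]`, as a relation between real numbers. -/
def GalConj (a : ℕ) (x y : ℝ) : Prop :=
  ∃ p q : ℤ, x = (p : ℝ) + q * theta1 a ∧ y = (p : ℝ) + q * (theta1 a)⁻¹

namespace GalConj

variable {a : ℕ} {x y z w : ℝ}

lemma unique (ha : 3 ≤ a) (h₁ : GalConj a x y) (h₂ : GalConj a x z) : y = z := by
  obtain ⟨p, q, hx, rfl⟩ := h₁
  obtain ⟨r, s, hx', rfl⟩ := h₂
  have := coeffs_eq_zero ha (p := p - r) (q := q - s) (by push_cast; linarith)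
  have h1 : p = r := by omega
  have h2 : q = s := by omega
  rw [h1, h2]

lemma add (h₁ : GalConj a x y) (h₂ : GalConj a z w) : GalConj a (x + z) (y + w) := by
  obtain ⟨p, q, rfl, rfl⟩ := h₁
  obtain ⟨r, s, rfl, rfl⟩ := h₂
  exact ⟨p + r, q + s, by push_cast; ring, by push_cast; ring⟩

lemma zero : GalConj a 0 0 := ⟨0, 0, by simp, by simp⟩

lemma int_mul (n : ℤ) (h : GalConj a x y) : GalConj a (n * x) (n * y) := by
  obtain ⟨p, q, rfl, rfl⟩ := h
  exact ⟨n * p, n * q, by push_cast; ring, by push_cast; ring⟩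

lemma theta_mul (ha : 3 ≤ a) (h : GalConj a x y) :
    GalConj a (theta1 a * x) ((theta1 a)⁻¹ * y) := by
  obtain ⟨p, q, rfl, rfl⟩ := h
  have h2 := theta1_sq ha
  refine ⟨-q, p + a * q, ?_, ?_⟩
  · push_cast; linear_combination (q : ℝ) * h2
  · rw [theta1_inv ha]; push_cast; linear_combination (q : ℝ) * h2

lemma theta_inv_mul (ha : 3 ≤ a) (h : GalConj a x y) :
    GalConj a ((theta1 a)⁻¹ * x) (theta1 a * y) := by
  obtain ⟨p, q, rfl, rfl⟩ := h
  have h2 := theta1_sq ha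
  refine ⟨a * p + q, -p, ?_, ?_⟩
  · rw [theta1_inv ha]; push_cast; linear_combination -(q : ℝ) * h2
  · rw [theta1_inv ha]; push_cast; linear_combination -(q : ℝ) * h2

lemma zpow_mul (ha : 3 ≤ a) (k : ℤ) (h : GalConj a x y) :
    GalConj a (theta1 a ^ k * x) ((theta1 a)⁻¹ ^ k * y) := by
  have h0 : theta1 a ≠ 0 := by linarith [one_lt_theta1 ha]
  induction k with
  | zero => simpa using h
  | succ n ih =>
    have := ih.theta_mul ha
    rw [zpow_add_one₀ h0, zpow_add_one₀ (inv_ne_zero h0)]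
    convert this using 1 <;> ring
  | pred n ih =>
    have := ih.theta_inv_mul ha
    rw [zpow_sub_one₀ h0, zpow_sub_one₀ (inv_ne_zero h0), inv_inv]
    convert this using 1 <;> ring

lemma sum (ha : 3 ≤ a) (b : ℤ → ℤ) (s : Finset ℤ) :
    GalConj a (∑ i ∈ s, (b i : ℝ) * theta1 a ^ i) (∑ i ∈ s, (b i : ℝ) * (theta1 a)⁻¹ ^ i) := by
  classical
  induction s using Finset.induction_on with
  | empty => simpa using zero
  | insert i s hi ih =>
    rw [Finset.sum_insert hi, Finset.sum_insert hi]
    refine add (int_mul _ ?_) ih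
    have h1 : GalConj a 1 1 := ⟨1, 0, by simp, by simp⟩
    simpa using h1.zpow_mul ha i

end GalConj

/-! ### Parry's estimate for the conjugate sum -/

lemma sum_Icc_eq_sum_range (g : ℤ → ℝ) (n : ℕ) :
    ∑ i ∈ Finset.Icc (0 : ℤ) n, g i = ∑ i ∈ Finset.range (n + 1), g i := by
  symm
  refine Finset.sum_bij (fun i _ => (i : ℤ)) ?_ ?_ ?_ ?_
  · intro i hi; simp only [Finset.mem_range] at hi; simp only [Finset.mem_Icc]; omega
  · intro i _ j _ h; exact_mod_cast h
  · intro i hi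
    simp only [Finset.mem_Icc] at hi
    exact ⟨i.toNat, by simp only [Finset.mem_range]; omega, by omega⟩
  · intro i _; rfl

/-- The two bounds have to be proved together: the first is the one needed, the second covers digit
strings that may follow a block `(a-1)(a-2)⋯(a-2)`. They express `θ = (a-1) + (a-2)t + (a-2)t² + ⋯`
and `θ - 1 = (a-2) + (a-2)t + ⋯`, with `t = θ⁻¹`. -/
lemma parry_bound {a : ℕ} (ha : 3 ≤ a) (n : ℕ) : ∀ b : ℕ → ℤ, (∀ i, b i ≤ (a : ℤ) - 1) →
    (¬ ∃ i j : ℕ, i < j ∧ b i = (a : ℤ) - 1 ∧ b j = (a : ℤ) - 1 ∧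
      ∀ k, i < k → k < j → b k = (a : ℤ) - 2) →
    ∑ i ∈ Finset.range n, (b i : ℝ) * (theta1 a)⁻¹ ^ i ≤ theta1 a ∧
    ((¬ ∃ j : ℕ, b j = (a : ℤ) - 1 ∧ ∀ k < j, b k = (a : ℤ) - 2) →
      ∑ i ∈ Finset.range n, (b i : ℝ) * (theta1 a)⁻¹ ^ i ≤ theta1 a - 1) := by
  have h1 := one_lt_theta1 ha
  have hinv := theta1_inv ha
  have ht0 : 0 < (theta1 a)⁻¹ := by positivity
  have ht1 : (theta1 a)⁻¹ < 1 := inv_lt_one_of_one_lt₀ h1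
  have hmul : (theta1 a)⁻¹ * theta1 a = 1 := inv_mul_cancel₀ (by linarith)
  induction n with
  | zero => intro b _ _; simp; constructor <;> [linarith; (intros; linarith)]
  | succ n ih =>
    intro b hb hforb
    have hshift : ∑ i ∈ Finset.range (n + 1), (b i : ℝ) * (theta1 a)⁻¹ ^ i
        = b 0 + (theta1 a)⁻¹ * ∑ i ∈ Finset.range n, (b (i + 1) : ℝ) * (theta1 a)⁻¹ ^ i := by
      rw [Finset.sum_range_succ', Finset.mul_sum, add_comm]
      congr 1
      · simp
      · refine Finset.sum_congr rfl fun i _ => ?_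
        ring
    obtain ⟨hA, hB⟩ := ih (fun i => b (i + 1)) (fun i => hb _) (by
      rintro ⟨i, j, hij, hi, hj, hk⟩
      refine hforb ⟨i + 1, j + 1, by omega, hi, hj, fun k h1 h2 => ?_⟩
      obtain ⟨k, rfl⟩ : ∃ k', k = k' + 1 := ⟨k - 1, by omega⟩
      exact hk k (by omega) (by omega))
    rw [hshift]
    set S := ∑ i ∈ Finset.range n, (b (i + 1) : ℝ) * (theta1 a)⁻¹ ^ i with hS
    have hA' : (theta1 a)⁻¹ * S ≤ 1 := by
      calc (theta1 a)⁻¹ * S ≤ (theta1 a)⁻¹ * theta1 a := by gcongr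
        _ = 1 := hmul
    have hB' : (¬ ∃ j : ℕ, b (j + 1) = (a : ℤ) - 1 ∧ ∀ k < j, b (k + 1) = (a : ℤ) - 2) →
        (theta1 a)⁻¹ * S ≤ 1 - (theta1 a)⁻¹ := fun h => by
      calc (theta1 a)⁻¹ * S ≤ (theta1 a)⁻¹ * (theta1 a - 1) := by gcongr; exact hB h
        _ = 1 - (theta1 a)⁻¹ := by linear_combination hmul
    constructor
    · by_cases h0 : b 0 = (a : ℤ) - 1
      · have := hB' (by
          rintro ⟨j, hj, hk⟩
          refine hforb ⟨0, j + 1, by omega, h0, hj, fun k h1 h2 => ?_⟩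
          obtain ⟨k, rfl⟩ : ∃ k', k = k' + 1 := ⟨k - 1, by omega⟩
          exact hk k (by omega))
        have : (b 0 : ℝ) = a - 1 := by rw [h0]; push_cast; ring
        linarith
      · have h0' : b 0 ≤ (a : ℤ) - 2 := by have := hb 0; omega
        have : (b 0 : ℝ) ≤ a - 2 := by exact_mod_cast h0'
        linarith
    · intro hno
      have h0 : b 0 ≠ (a : ℤ) - 1 := fun h => hno ⟨0, h, by simp⟩
      by_cases h00 : b 0 = (a : ℤ) - 2
      · have := hB' (by
          rintro ⟨j, hj, hk⟩
          refine hno ⟨j + 1, hj, fun k h2 => ?_⟩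
          rcases k with _ | k
          · exact h00
          · exact hk k (by omega))
        have : (b 0 : ℝ) = a - 2 := by rw [h00]; push_cast; ring
        linarith
      · have h0' : b 0 ≤ (a : ℤ) - 3 := by have := hb 0; omega
        have : (b 0 : ℝ) ≤ a - 3 := by exact_mod_cast h0'
        linarith

lemma admissible_sum_le {a : ℕ} (ha : 3 ≤ a) {M : ℤ} (hM : 0 ≤ M) {b : ℤ → ℤ}
    (hb : AdmissibleOn1 a 0 M b) :
    ∑ i ∈ Finset.Icc (0 : ℤ) M, (b i : ℝ) * (theta1 a)⁻¹ ^ i ≤ theta1 a := by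
  obtain ⟨-, hdig, hforb⟩ := hb
  lift M to ℕ using hM
  rw [sum_Icc_eq_sum_range]
  have := (parry_bound ha (M + 1) (fun i => b i) (fun i => (hdig i).2) (by
    rintro ⟨i, j, hij, hi, hj, hk⟩
    refine hforb ⟨i, j, by omega, hi, hj, fun k h1 h2 => ?_⟩
    lift k to ℕ using by omega
    exact hk k (by omega) (by omega))).1
  simpa using this

/-! ### Finite expansions of totally positive elements -/

/-- The value `∑ cᵢ θ^i` of a finitely supported digit sequence. -/
def evalRep (a : ℕ) : (ℤ →₀ ℤ) →ₗ[ℤ] ℝ := Finsupp.linearCombination ℤ (fun i => theta1 a ^ i)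

/-- The sum of the digits of a finitely supported digit sequence. -/
def digitSum : (ℤ →₀ ℤ) →ₗ[ℤ] ℤ := Finsupp.linearCombination ℤ (fun _ => (1 : ℤ))

/-- The digits of `∑_{k=i}^{j} (a θ^k - θ^{k-1} - θ^{k+1})`, a representation of zero. -/
def relator (a : ℕ) (i j : ℤ) : ℤ →₀ ℤ :=
  ∑ k ∈ Finset.Icc i j,
    (Finsupp.single k (a : ℤ) - Finsupp.single (k - 1) 1 - Finsupp.single (k + 1) 1)

lemma evalRep_relator {a : ℕ} (ha : 3 ≤ a) (i j : ℤ) : evalRep a (relator a i j) = 0 := by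
  have h0 : theta1 a ≠ 0 := by linarith [one_lt_theta1 ha]
  rw [relator, map_sum]
  refine Finset.sum_eq_zero fun k _ => ?_
  simp only [evalRep, map_sub, Finsupp.linearCombination_single, zsmul_eq_mul]
  rw [zpow_add_one₀ h0, zpow_sub_one₀ h0, theta1_inv ha]
  push_cast
  ring

lemma digitSum_relator_pos {a : ℕ} (ha : 3 ≤ a) {i j : ℤ} (hij : i ≤ j) :
    0 < digitSum (relator a i j) := by
  rw [relator, map_sum]
  refine Finset.sum_pos (fun k _ => ?_) ⟨i, by simp [hij]⟩
  simp only [digitSum, map_sub, Finsupp.linearCombination_single, smul_eq_mul]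
  omega

lemma relator_apply (a : ℕ) (i j k : ℤ) : relator a i j k =
    (if i ≤ k ∧ k ≤ j then (a : ℤ) else 0) - (if i ≤ k + 1 ∧ k + 1 ≤ j then 1 else 0)
      - (if i ≤ k - 1 ∧ k - 1 ≤ j then 1 else 0) := by
  have e1 : ∀ l : ℤ, (l - 1 = k) = (l = k + 1) := fun l => by apply propext; omega
  have e2 : ∀ l : ℤ, (l + 1 = k) = (l = k - 1) := fun l => by apply propext; omega
  simp only [relator, Finsupp.finsetSum_apply, Finsupp.sub_apply, Finset.sum_sub_distrib,
    Finsupp.single_apply, e1, e2, Finset.sum_ite_eq', Finset.mem_Icc]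

/-- A totally positive `x` lies in the cone spanned by `θ^k` and `θ^{k+1}`, where `k` is determined
by `θ^{2k} ≤ x / x' < θ^{2k+2}`. -/
lemma exists_nonneg_rep {a : ℕ} (ha : 3 ≤ a) {x y : ℝ} (h : GalConj a x y) (hx : 0 < x)
    (hy : 0 < y) : ∃ c : ℤ →₀ ℤ, (∀ i, 0 ≤ c i) ∧ evalRep a c = x := by
  have h1 := one_lt_theta1 ha
  have h0 : theta1 a ≠ 0 := by linarith
  obtain ⟨k, hk1, hk2⟩ := exists_mem_Ico_zpow (x := x / y) (y := theta1 a ^ 2) (by positivity)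
    (one_lt_pow₀ h1 two_ne_zero)
  obtain ⟨p, q, hxe, hye⟩ := h.zpow_mul ha (-k)
  set t := theta1 a with ht
  have hP : 0 < t ^ k := by positivity
  rw [le_div_iff₀ hy, ← zpow_natCast, ← zpow_mul, mul_comm, mul_comm _ k, zpow_mul] at hk1
  rw [div_lt_iff₀ hy, zpow_add_one₀ (by positivity), ← zpow_natCast, ← zpow_mul, mul_comm _ k,
    zpow_mul] at hk2
  rw [zpow_neg] at hxe
  rw [inv_zpow', neg_neg] at hye
  norm_cast at hk1 hk2
  have hxP : x = t ^ k * (p + q * t) := by rw [← hxe]; field_simp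
  have hyP : y * (t ^ k) ^ 2 = t ^ k * (p + q * t⁻¹) := by rw [← hye]; ring
  have hlow : (p : ℝ) + q * t⁻¹ ≤ p + q * t := by
    rw [hyP, hxP] at hk1
    exact le_of_mul_le_mul_left hk1 hP
  have hup : (p : ℝ) + q * t < t ^ 2 * (p + q * t⁻¹) := by
    have : t ^ k * (p + q * t) < t ^ k * (t ^ 2 * (p + q * t⁻¹)) := by
      rw [← hxP]
      calc x < (t ^ k) ^ 2 * t ^ 2 * y := hk2
        _ = t ^ 2 * (y * (t ^ k) ^ 2) := by ring
        _ = _ := by rw [hyP]; ring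
    exact lt_of_mul_lt_mul_left this hP.le
  have hti : t⁻¹ < 1 := inv_lt_one_of_one_lt₀ h1
  have hq : (0 : ℝ) ≤ q := by
    by_contra hq
    push Not at hq
    nlinarith
  have hp : (0 : ℝ) ≤ p := by
    have e : t ^ 2 * (p + q * t⁻¹) = t ^ 2 * p + q * t := by field_simp
    rw [e] at hup
    by_contra hp
    push Not at hp
    nlinarith [one_lt_pow₀ h1 two_ne_zero]
  have hq' : 0 ≤ q := by exact_mod_cast hq
  have hp' : 0 ≤ p := by exact_mod_cast hp
  refine ⟨Finsupp.single k p + Finsupp.single (k + 1) q, fun i => ?_, ?_⟩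
  · simp only [Finsupp.add_apply, Finsupp.single_apply]
    split_ifs <;> omega
  · simp only [evalRep, map_add, Finsupp.linearCombination_single, zsmul_eq_mul]
    rw [zpow_add_one₀ h0, hxP]
    ring

/-- A nonnegative representation of minimal digit sum is admissible. -/
lemma exists_admissible_rep {a : ℕ} (ha : 3 ≤ a) {x : ℝ}
    (h : ∃ c : ℤ →₀ ℤ, (∀ i, 0 ≤ c i) ∧ evalRep a c = x) :
    ∃ c : ℤ →₀ ℤ, evalRep a c = x ∧ (∀ i, 0 ≤ c i ∧ c i ≤ (a : ℤ) - 1) ∧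
      ¬ ∃ i j : ℤ, i < j ∧ c i = (a : ℤ) - 1 ∧ c j = (a : ℤ) - 1 ∧
        ∀ k, i < k → k < j → c k = (a : ℤ) - 2 := by
  obtain ⟨c₀, h₀⟩ := h
  -- The digit sum of a nonnegative sequence is nonnegative, so `toNat` loses nothing.
  have hwf := WellFounded.has_min (measure fun c : ℤ →₀ ℤ => (digitSum c).toNat).wf
    {c | (∀ i, 0 ≤ c i) ∧ evalRep a c = x} ⟨c₀, h₀⟩
  obtain ⟨c, ⟨hc0, hcx⟩, hmin⟩ := hwf
  have hsum : ∀ d : ℤ →₀ ℤ, (∀ i, 0 ≤ d i) → 0 ≤ digitSum d := by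
    intro d hd
    rw [digitSum, Finsupp.linearCombination_apply]
    exact Finset.sum_nonneg fun i _ => by simpa using hd i
  have hred : ∀ i j : ℤ, i ≤ j → ¬ ∀ k, relator a i j k ≤ c k := by
    intro i j hij hle
    have hnn : ∀ k, 0 ≤ (c - relator a i j) k := fun k => sub_nonneg.2 (hle k)
    refine hmin (c - relator a i j) ⟨hnn, ?_⟩ ?_
    · rw [map_sub, evalRep_relator ha, sub_zero, hcx]
    · have := digitSum_relator_pos ha hij
      have hnn' := hsum _ hnn
      change (digitSum (c - relator a i j)).toNat < (digitSum c).toNat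
      rw [map_sub] at hnn' ⊢
      omega
  refine ⟨c, hcx, fun i => ⟨hc0 i, ?_⟩, ?_⟩
  · by_contra hi
    refine hred i i le_rfl fun k => ?_
    rw [relator_apply]
    have := hc0 k
    rcases eq_or_ne k i with rfl | hk <;> split_ifs <;> omega
  · rintro ⟨i, j, hij, hi, hj, hk⟩
    refine hred i j hij.le fun k => ?_
    rw [relator_apply]
    have h0 := hc0 k
    have hmid := hk k
    rcases eq_or_ne k i with rfl | hki
    · split_ifs <;> omega
    rcases eq_or_ne k j with rfl | hkj
    · split_ifs <;> omega
    split_ifs <;> omega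

/-- A totally positive element becomes a `θ`-integer after division by some power of `θ`. -/
lemma exists_div_mem {a : ℕ} (ha : 3 ≤ a) {x y : ℝ} (h : GalConj a x y) (hx : 0 < x)
    (hy : 0 < y) : ∃ k : ℤ, x / theta1 a ^ k ∈ Ztheta1 a := by
  have h0 : theta1 a ≠ 0 := by linarith [one_lt_theta1 ha]
  obtain ⟨c, hcx, hdig, hforb⟩ := exists_admissible_rep ha (exists_nonneg_rep ha h hx hy)
  obtain ⟨N, hN⟩ : ∃ N : ℕ, ∀ i, c i ≠ 0 → -(N : ℤ) ≤ i ∧ i ≤ N := by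
    refine ⟨c.support.sup Int.natAbs, fun i hi => ?_⟩
    have := Finset.le_sup (f := Int.natAbs) (Finsupp.mem_support_iff.2 hi)
    omega
  refine ⟨-N, 1, 2 * N, fun i => c (i - N), Or.inl rfl, by omega, ⟨?_, fun i => hdig _, ?_⟩, ?_⟩
  · intro i hi
    have := hN _ hi
    omega
  · rintro ⟨i, j, hij, hi, hj, hk⟩
    refine hforb ⟨i - N, j - N, by omega, hi, hj, fun k h1 h2 => ?_⟩
    have := hk (k + N) (by omega) (by omega)
    simpa using this
  · have hsum : x = ∑ i ∈ Finset.Icc (-(N : ℤ)) N, (c i : ℝ) * theta1 a ^ i := by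
      rw [← hcx, evalRep, Finsupp.linearCombination_apply,
        Finsupp.sum_of_support_subset c (s := Finset.Icc (-(N : ℤ)) N) _ _ (by simp)]
      · simp [zsmul_eq_mul]
      · intro i hi
        exact Finset.mem_Icc.2 (hN i (Finsupp.mem_support_iff.1 hi))
    rw [hsum, Finset.sum_div, Int.cast_one, one_mul]
    refine Finset.sum_bij (fun i _ => i + N) ?_ ?_ ?_ ?_
    · intro i hi; simp only [Finset.mem_Icc] at hi ⊢; omega
    · intro i _ j _ h; simpa using h
    · intro i hi
      simp only [Finset.mem_Icc] at hi
      exact ⟨i - N, by simp only [Finset.mem_Icc]; omega, by ring⟩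
    · intro i _
      simp only [add_sub_cancel_right]
      rw [zpow_add₀ h0, zpow_neg, div_inv_eq_mul, mul_assoc]

/-! ### The valuation -/

/-- Dividing a `θ`-integer whose lowest digit vanishes by `θ` gives a `θ`-integer. -/
lemma div_theta_mem {a : ℕ} (ha : 3 ≤ a) {M : ℤ} (hM : 0 ≤ M) {b : ℤ → ℤ}
    (hb : AdmissibleOn1 a 0 M b) (hb0 : b 0 = 0) :
    (∑ i ∈ Finset.Icc (0 : ℤ) M, (b i : ℝ) * theta1 a ^ i) / theta1 a ∈ Ztheta1 a := by
  have h0 : theta1 a ≠ 0 := by linarith [one_lt_theta1 ha]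
  obtain ⟨hsupp, hdig, hforb⟩ := hb
  refine ⟨1, M, fun i => b (i + 1), Or.inl rfl, hM, ⟨?_, fun i => hdig _, ?_⟩, ?_⟩
  · intro i hi
    have := hsupp _ hi
    have : i ≠ -1 := by rintro rfl; exact hi (by simpa using hb0)
    omega
  · rintro ⟨i, j, hij, hi, hj, hk⟩
    refine hforb ⟨i + 1, j + 1, by omega, hi, hj, fun k h1 h2 => ?_⟩
    have := hk (k - 1) (by omega) (by omega)
    simpa using this
  · lift M to ℕ using hM
    have hbM : b ((M : ℤ) + 1) = 0 := by
      by_contra h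
      have := hsupp _ h
      omega
    rw [sum_Icc_eq_sum_range, sum_Icc_eq_sum_range, Finset.sum_range_succ', Finset.sum_range_succ]
    simp only [Nat.cast_zero, hb0, hbM, Int.cast_zero, zero_mul, add_zero, Int.cast_one, one_mul,
      Finset.sum_div]
    refine Finset.sum_congr rfl fun i _ => ?_
    push_cast
    rw [zpow_add_one₀ h0]
    field_simp

/-- Norm–conjugate comparison, norm `1` case. For every
`f = p + qθ ∈ O_K⁰` with `f > 0`, one has `|f|_θ ≤ f' ≤ θ·|f|_θ`, where `f' = p + qθ⁻¹`. -/
theorem norm_conjugate_comparison_pos_one (a : ℕ) (ha : 3 ≤ a) (p q : ℤ)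
    (hpos : 0 < (p : ℝ) + (q : ℝ) * theta1 a)
    (hconj : 0 ≤ ((p : ℝ) + (q : ℝ) * theta1 a) * ((p : ℝ) + (q : ℝ) * (theta1 a)⁻¹)) :
    thNorm1 a ((p : ℝ) + (q : ℝ) * theta1 a) ≤ (p : ℝ) + (q : ℝ) * (theta1 a)⁻¹ ∧
    (p : ℝ) + (q : ℝ) * (theta1 a)⁻¹ ≤ theta1 a * thNorm1 a ((p : ℝ) + (q : ℝ) * theta1 a) := by
  have hin : inOK0 a ((p : ℝ) + (q : ℝ) * theta1 a) := ⟨p, q, rfl, hconj⟩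
  have hG : GalConj a ((p : ℝ) + q * theta1 a) ((p : ℝ) + q * (theta1 a)⁻¹) := ⟨p, q, rfl, rfl⟩
  have h1 := one_lt_theta1 ha
  have h0 : theta1 a ≠ 0 := by linarith
  have hypos : 0 < (p : ℝ) + q * (theta1 a)⁻¹ := by
    refine lt_of_le_of_ne (nonneg_of_mul_nonneg_right hconj hpos) fun h => ?_
    rw [theta1_inv ha] at h
    have := coeffs_eq_zero ha (p := p + a * q) (q := -q) (by push_cast; linarith)
    have hq : q = 0 := by omega
    have hp : p = 0 := by simpa [hq] using this.1
    simp [hp, hq] at hpos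
  rw [thNorm1, if_neg hpos.ne', if_pos hin]
  set x := (p : ℝ) + (q : ℝ) * theta1 a with hx
  set y := (p : ℝ) + (q : ℝ) * (theta1 a)⁻¹ with hy
  have key : ∀ k : ℤ, x / theta1 a ^ k ∈ Ztheta1 a → ∃ M : ℤ, ∃ b : ℤ → ℤ, 0 ≤ M ∧
      AdmissibleOn1 a 0 M b ∧
      x / theta1 a ^ k = ∑ i ∈ Finset.Icc (0 : ℤ) M, (b i : ℝ) * theta1 a ^ i ∧
      y = theta1 a ^ (-k) * ∑ i ∈ Finset.Icc (0 : ℤ) M, (b i : ℝ) * (theta1 a)⁻¹ ^ i := by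
    rintro k ⟨ε, M, b, hε, hM, hb, hxe⟩
    have hnn : 0 ≤ ∑ i ∈ Finset.Icc (0 : ℤ) M, (b i : ℝ) * theta1 a ^ i :=
      Finset.sum_nonneg fun i _ => mul_nonneg (by exact_mod_cast (hb.2.1 i).1) (by positivity)
    have hq : 0 < x / theta1 a ^ k := by positivity
    have hxe' : x / theta1 a ^ k = ∑ i ∈ Finset.Icc (0 : ℤ) M, (b i : ℝ) * theta1 a ^ i := by
      rcases hε with rfl | rfl
      · simpa using hxe
      · rw [hxe] at hq
        push_cast at hq
        linarith
    refine ⟨M, b, hM, hb, hxe', hG.unique ha ?_⟩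
    have := (GalConj.sum ha b (Finset.Icc 0 M)).zpow_mul ha k
    rw [← hxe', inv_zpow'] at this
    convert this using 1
    field_simp
  have hbound : ∀ k : ℤ, x / theta1 a ^ k ∈ Ztheta1 a → y ≤ theta1 a * theta1 a ^ (-k) := by
    intro k hk
    obtain ⟨M, b, hM, hb, -, hye⟩ := key k hk
    rw [hye, mul_comm]
    gcongr
    exact admissible_sum_le ha hM hb
  have hne : {k : ℤ | x / theta1 a ^ k ∈ Ztheta1 a}.Nonempty := exists_div_mem ha hG hpos hypos
  have hbdd : BddAbove {k : ℤ | x / theta1 a ^ k ∈ Ztheta1 a} := by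
    obtain ⟨n, hn⟩ := pow_unbounded_of_one_lt (theta1 a / y) h1
    refine ⟨n, fun k hk => ?_⟩
    have := hbound k hk
    rw [zpow_neg, ← div_eq_mul_inv, le_div_iff₀ (by positivity), ← le_div_iff₀' hypos] at this
    have h3 : theta1 a ^ k < theta1 a ^ (n : ℤ) := by
      rw [zpow_natCast]; exact this.trans_lt hn
    exact ((zpow_lt_zpow_iff_right₀ h1).1 h3).le
  have hmem : x / theta1 a ^ vval1 a x ∈ Ztheta1 a := Int.csSup_mem hne hbdd
  have hmax : ∀ k : ℤ, x / theta1 a ^ k ∈ Ztheta1 a → k ≤ vval1 a x :=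
    fun k hk => le_csSup hbdd hk
  refine ⟨?_, hbound _ hmem⟩
  obtain ⟨M, b, hM, hb, hxe, hye⟩ := key _ hmem
  have hb0 : b 0 ≠ 0 := by
    intro hb0
    have := div_theta_mem ha hM hb hb0
    rw [← hxe, div_div, ← zpow_add_one₀ h0] at this
    have := hmax _ this
    omega
  have hb1 : (1 : ℝ) ≤ b 0 := by
    have := (hb.2.1 0).1
    exact_mod_cast (by omega : 1 ≤ b 0)
  rw [hye]
  refine le_mul_of_one_le_right (by positivity) ?_
  have := Finset.single_le_sum (f := fun i : ℤ => (b i : ℝ) * (theta1 a)⁻¹ ^ i)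
    (s := Finset.Icc 0 M)
    (fun i _ => mul_nonneg (by exact_mod_cast (hb.2.1 i).1) (by positivity))
    (Finset.mem_Icc.2 ⟨le_rfl, hM⟩)
  simp only [zpow_zero, mul_one] at this
  exact hb1.trans this
end
end
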